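/- arXiv:2411.15877 — 2 statements merged into one kernel-verified Lean document; each statement's English description precedes it below -/
import Mathlib

section
/- Let 0 < u̲ ≤ ū and ε > 0. Let g_1,…,g_K ∈ ℝ^d be arbitrary vectors and define u_0 ∈ ℝ^d by u_{0,j} = 1/ū² for all j, and recursively u_k = β_k u_{k-1} + (1−β_k) g_k², where g_k² denotes the componentwise square, and where β_k = 1 if there exists j ∈ {1,…,d} with g_{k,j}² ≤ u_{k-1,j}, and otherwise β_k is any real number in the interval [max{ max_{j=1,…,d} (g_{k,j}² − 1/u̲²)/(g_{k,j}² − u_{k-1,j}), max_{j=1,…,d} (g_{k,j}² − (1+ε)² u_{k-1,j})/(g_{k,j}² − u_{k-1,j}), 0 }, 1]. Then for every k = 0,…,K and every j = 1,…,d one has 1/ū² ≤ u_{k,j} ≤ 1/u̲², i.e. u̲ ≤ 1/√u_{k,j} ≤ ū. -/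
open scoped BigOperators

/-- first part of Proposition 3.1 of the paper. Given bounds
`0 < u̲ ≤ ū` and adjusted level `ε > 0`, the moving-average sequence `u_k` of
SGA-RMSProp, generated by the β-Selection rule, satisfies
`1/ū² ≤ u_{k,j} ≤ 1/u̲²` for every `k = 0, …, K` and every `j`. -/
theorem stmt_2 {d K : ℕ} (lb ub ε : ℝ) (hlb : 0 < lb) (hlbub : lb ≤ ub) (hε : 0 < ε)
    (g u : ℕ → Fin d → ℝ) (β : ℕ → ℝ)
    (hu0 : ∀ j, u 0 j = 1 / ub ^ 2)
    (hu : ∀ k, 1 ≤ k → k ≤ K → ∀ j,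
      u k j = β k * u (k - 1) j + (1 - β k) * (g k j) ^ 2)
    (hβ1 : ∀ k, 1 ≤ k → k ≤ K →
      (∃ j, (g k j) ^ 2 ≤ u (k - 1) j) → β k = 1)
    (hβ2 : ∀ k, 1 ≤ k → k ≤ K →
      (¬ ∃ j, (g k j) ^ 2 ≤ u (k - 1) j) →
        β k ∈ Set.Icc
          (max (max
              (⨆ j, ((g k j) ^ 2 - 1 / lb ^ 2) / ((g k j) ^ 2 - u (k - 1) j))
              (⨆ j, ((g k j) ^ 2 - (1 + ε) ^ 2 * u (k - 1) j) / ((g k j) ^ 2 - u (k - 1) j)))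
            0) 1) :
    ∀ k, k ≤ K → ∀ j, 1 / ub ^ 2 ≤ u k j ∧ u k j ≤ 1 / lb ^ 2 := by
  intro k
  induction k with
  | zero =>
    intro _ j
    rw [hu0]
    refine ⟨le_refl _, ?_⟩
    gcongr
  | succ n ih =>
    intro hk j
    have ihj := ih (by omega) j
    have e := hu (n + 1) (by omega) hk j
    have h1 := hβ1 (n + 1) (by omega) hk
    have h2 := hβ2 (n + 1) (by omega) hk
    simp only [Nat.add_sub_cancel] at e h1 h2
    by_cases h : ∃ j, (g (n + 1) j) ^ 2 ≤ u n j
    · rw [e, h1 h]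
      simpa using ihj
    · obtain ⟨hl, hr⟩ := h2 h
      push Not at h
      have hpos : 0 < (g (n + 1) j) ^ 2 - u n j := sub_pos.mpr (h j)
      have hb : ((g (n + 1) j) ^ 2 - 1 / lb ^ 2) / ((g (n + 1) j) ^ 2 - u n j) ≤ β (n + 1) :=
        (le_ciSup (f := fun j => ((g (n + 1) j) ^ 2 - 1 / lb ^ 2) / ((g (n + 1) j) ^ 2 - u n j))
          (Set.finite_range _).bddAbove j).trans
          ((le_max_left _ _).trans ((le_max_left _ _).trans hl))
      rw [div_le_iff₀ hpos] at hb
      have hm := mul_nonneg (sub_nonneg.mpr hr) hpos.le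
      constructor
      · rw [e]; linarith [ihj.1]
      · rw [e]; linarith
end

section
/- Let 0 < u̲ ≤ ū and ε > 0. Let g_1,…,g_K ∈ ℝ^d be arbitrary vectors and define u_0 ∈ ℝ^d by u_{0,j} = 1/ū² for all j, and recursively u_k = β_k u_{k-1} + (1−β_k) g_k² (componentwise square), where β_k = 1 if there exists j ∈ {1,…,d} with g_{k,j}² ≤ u_{k-1,j}, and otherwise β_k is any real number in [max{ max_{j=1,…,d} (g_{k,j}² − 1/u̲²)/(g_{k,j}² − u_{k-1,j}), max_{j=1,…,d} (g_{k,j}² − (1+ε)² u_{k-1,j})/(g_{k,j}² − u_{k-1,j}), 0 }, 1]. Define the diagonal matrices D_k = diag(1/√u_{k,1},…,1/√u_{k,d}). Then for every k = 1,…,K: ‖D_k^{1/2} D_{k-1}^{-1/2}‖₂ ≤ 1 and ‖D_k^{-1} D_{k-1} − I‖₂ ≤ ε; equivalently, u_{k-1,j} ≤ u_{k,j} ≤ (1+ε)² u_{k-1,j} for every j = 1,…,d. -/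
open Matrix
open scoped BigOperators

noncomputable def specNorm {m n : ℕ} (M : Matrix (Fin m) (Fin n) ℝ) : ℝ :=
  ‖LinearMap.toContinuousLinearMap (Matrix.toEuclideanLin M)‖

theorem specNorm_diagonal_le {n : ℕ} (v : Fin n → ℝ) (c : ℝ) (hc : 0 ≤ c)
    (h : ∀ j, |v j| ≤ c) : specNorm (Matrix.diagonal v) ≤ c := by
  unfold specNorm
  refine ContinuousLinearMap.opNorm_le_bound _ hc (fun x => ?_)
  rw [EuclideanSpace.norm_eq, EuclideanSpace.norm_eq, ← Real.sqrt_sq hc,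
    ← Real.sqrt_mul (sq_nonneg c)]
  apply Real.sqrt_le_sqrt
  rw [Finset.mul_sum]
  refine Finset.sum_le_sum (fun j _ => ?_)
  have e : (LinearMap.toContinuousLinearMap (Matrix.toEuclideanLin (Matrix.diagonal v)) x) j
      = v j * x j := by
    simp [Matrix.toLpLin_apply, Matrix.mulVec_diagonal]
  rw [e, norm_mul, mul_pow]
  have := h j
  rw [← Real.norm_eq_abs] at this
  gcongr

/-- second part of Proposition 3.1 of the paper. With the β-Selection
rule, the diagonal matrices `D_k = diag(1/√u_{k,1}, …, 1/√u_{k,d})` satisfy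
`‖D_k^{1/2} D_{k-1}^{-1/2}‖₂ ≤ 1` and `‖D_k⁻¹ D_{k-1} − I‖₂ ≤ ε` for `k = 1, …, K`;
equivalently, `u_{k-1,j} ≤ u_{k,j} ≤ (1+ε)² u_{k-1,j}` for every `j`.
Here `D_k^{1/2} = diag(√(1/√u_{k,j}))` and `D_{k-1}^{-1/2} = diag(√(√u_{k-1,j}))`. -/
theorem stmt_3 {d K : ℕ} (lb ub ε : ℝ) (hlb : 0 < lb) (hlbub : lb ≤ ub) (hε : 0 < ε)
    (g u : ℕ → Fin d → ℝ) (β : ℕ → ℝ)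
    (hu0 : ∀ j, u 0 j = 1 / ub ^ 2)
    (hu : ∀ k, 1 ≤ k → k ≤ K → ∀ j,
      u k j = β k * u (k - 1) j + (1 - β k) * (g k j) ^ 2)
    (hβ1 : ∀ k, 1 ≤ k → k ≤ K →
      (∃ j, (g k j) ^ 2 ≤ u (k - 1) j) → β k = 1)
    (hβ2 : ∀ k, 1 ≤ k → k ≤ K →
      (¬ ∃ j, (g k j) ^ 2 ≤ u (k - 1) j) →
        β k ∈ Set.Icc
          (max (max
              (⨆ j, ((g k j) ^ 2 - 1 / lb ^ 2) / ((g k j) ^ 2 - u (k - 1) j))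
              (⨆ j, ((g k j) ^ 2 - (1 + ε) ^ 2 * u (k - 1) j) / ((g k j) ^ 2 - u (k - 1) j)))
            0) 1) :
    ∀ k, 1 ≤ k → k ≤ K →
      specNorm (Matrix.diagonal (fun j => Real.sqrt (1 / Real.sqrt (u k j))) *
          Matrix.diagonal (fun j => Real.sqrt (Real.sqrt (u (k - 1) j)))) ≤ 1 ∧
      specNorm (Matrix.diagonal (fun j => Real.sqrt (u k j)) *
          Matrix.diagonal (fun j => 1 / Real.sqrt (u (k - 1) j)) - 1) ≤ ε ∧
      ∀ j, u (k - 1) j ≤ u k j ∧ u k j ≤ (1 + ε) ^ 2 * u (k - 1) j := by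
  have step : ∀ k, 1 ≤ k → k ≤ K → (∀ j, 0 < u (k - 1) j) →
      ∀ j, u (k - 1) j ≤ u k j ∧ u k j ≤ (1 + ε) ^ 2 * u (k - 1) j := by
    intro k h1 hK hpos j
    have hp := hpos j
    rw [hu k h1 hK j]
    by_cases hex : ∃ j, (g k j) ^ 2 ≤ u (k - 1) j
    · rw [hβ1 k h1 hK hex]
      constructor
      · linarith
      · nlinarith [mul_pos hε hp, mul_pos hε (mul_pos hε hp)]
    · obtain ⟨hl, hr⟩ := hβ2 k h1 hK hex
      have hgt : 0 < (g k j) ^ 2 - u (k - 1) j := by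
        push Not at hex
        linarith [hex j]
      have h2 := (le_ciSup (f := fun j => ((g k j) ^ 2 - (1 + ε) ^ 2 * u (k - 1) j) /
        ((g k j) ^ 2 - u (k - 1) j)) (Set.finite_range _).bddAbove j).trans
        ((le_max_right _ _).trans ((le_max_left _ _).trans hl))
      rw [div_le_iff₀ hgt] at h2
      constructor
      · nlinarith [mul_nonneg (sub_nonneg.2 hr) hgt.le]
      · nlinarith
  have pos : ∀ k, k ≤ K → ∀ j, 0 < u k j := by
    intro k
    induction k with
    | zero =>
      intro _ j
      rw [hu0 j]
      have : 0 < ub := lt_of_lt_of_le hlb hlbub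
      positivity
    | succ n ih =>
      intro hn j
      have hn' := ih (by omega)
      exact lt_of_lt_of_le (hn' j) (step (n + 1) (by omega) hn hn' j).1
  intro k h1 hK
  have hp := pos (k - 1) (by omega)
  have hs := step k h1 hK hp
  refine ⟨?_, ?_, hs⟩
  · rw [Matrix.diagonal_mul_diagonal]
    refine specNorm_diagonal_le _ _ zero_le_one (fun j => ?_)
    rw [abs_of_nonneg (by positivity), ← Real.sqrt_mul (by positivity), Real.sqrt_le_one]
    have hq : 0 < Real.sqrt (u k j) := Real.sqrt_pos.2 (pos k hK j)
    rw [one_div, inv_mul_le_iff₀ hq, mul_one]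
    exact Real.sqrt_le_sqrt (hs j).1
  · rw [Matrix.diagonal_mul_diagonal, ← Matrix.diagonal_one, Matrix.diagonal_sub]
    refine specNorm_diagonal_le _ _ hε.le (fun j => ?_)
    have hq : 0 < Real.sqrt (u (k - 1) j) := Real.sqrt_pos.2 (hp j)
    have ha := Real.sqrt_le_sqrt (hs j).1
    have hb := Real.sqrt_le_sqrt (hs j).2
    rw [Real.sqrt_mul (by positivity), Real.sqrt_sq (by positivity)] at hb
    have h3 : 1 ≤ Real.sqrt (u k j) * (1 / Real.sqrt (u (k - 1) j)) := by
      rw [mul_one_div, le_div_iff₀ hq]; linarith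
    have h4 : Real.sqrt (u k j) * (1 / Real.sqrt (u (k - 1) j)) ≤ 1 + ε := by
      rw [mul_one_div, div_le_iff₀ hq]; linarith
    rw [abs_le]
    constructor <;> linarith
end
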